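/- Fix an integer d ≥ 3. Let z₁ > 0 be the solution of z₁ = (e^{z₁} − 1)/(d − 1) and set α₁ = z₁ / (d·(1 − e^{−z₁})^{d−1}). Let 0 < α ≤ α₁, let m → ∞, n = ⌊αm⌋, and let G be the random bipartite graph on parts L = [n], R = [m] in which each x ∈ L independently chooses d uniformly random neighbours in R. Then with high probability G contains a matching of size n, i.e. μ(G) = n. -/

import Mathlib

open scoped Classical

/-!
A configuration records the `d` choices of every left vertex, and the claim is that the fraction
of configurations without a matching saturating the left side is `O(1/m)`.

Two reductions come first. A matching that uses only the first three choices of every vertex is a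
matching, so the bad fraction for `d` is at most the bad fraction for `3` (`bad_le_bad_three`).
Moreover the threshold `α₁` is below `41/50` for every `d ≥ 3` (`threshold_lt`). Since `41/50` is
itself below the matching threshold of three-choice graphs (about `0.917`), it suffices
to treat `d = 3` and `n < 41/50 * m` (`bad_three_le`).

For `d = 3`, suppose Hall's condition fails. Reveal the left vertices in order and stop at the
first `k` for which some set `S` of the first `k` vertices has fewer than `|S|` neighbours; take
`S` of maximal size. Minimality of `k` gives `|N(S)| = |S| - 1`, and maximality of `S` forces every
other vertex among the first `k` to have at least two distinct neighbours outside `N(S)`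
(`exists_violator`). Using this condition in the union bound is what makes it succeed at density
`41/50`. The union bound runs over `k`, `s = |S|`, `S` and `T = N(S)` (`bad_le_sum`). The number of
ways in which the `3s` choices from `S` cover `T` exactly is bounded by
`(3s)! (e ^ z - 1) ^ |T| / z ^ (3s)`, the coefficient bound for the exponential generating function
of surjections (`surj_bound`), at the fixed point `z = 3`. Entropy bounds turn the `(k, s)` term
into `18 e ^ 18 s ^ 2 / m * exp (m * rate (s / m))` (`unionTerm_le`), where `rate` is an explicit
function on `(0, 41/50)`. It is negative there: like `x log x` near `0`, and bounded away from `0`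
elsewhere by monotonicity and numerical bounds on logarithms (`rate_le_small`, `rate_le_mid`).
Each term is then `O(1/m ^ 3)` (`sq_mul_exp_rate_le`), and there are `O(m ^ 2)` of them.
-/

/-! ### Counting surjections -/

/-- The number of maps `ι → β` with image exactly `T` is `N! [z^N] (e^z - 1)^|T|` with `N = |ι|`;
the coefficient is bounded by the value at `z`. The induction on `T` splits off the fibre over one
element of `T`, a nonempty subset of `ι`. -/
theorem surj_bound {β : Type} [Fintype β] (z : ℝ) (hz : 0 < z) (T : Finset β) :
    ∀ (ι : Type) [Fintype ι],
      (((Finset.univ : Finset (ι → β)).filter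
        (fun f => Finset.univ.image f = T)).card : ℝ) * z ^ Fintype.card ι
        ≤ (Fintype.card ι).factorial * (Real.exp z - 1) ^ T.card := by
  induction T using Finset.induction_on with
  | empty =>
    intro ι _
    rcases isEmpty_or_nonempty ι with h | h
    · have : (((Finset.univ : Finset (ι → β)).filter
        (fun f => Finset.univ.image f = ∅)).card : ℝ) ≤ 1 := by
        exact_mod_cast (Finset.card_le_univ _).trans (by simp)
      simp
    · have : ((Finset.univ : Finset (ι → β)).filter
        (fun f => Finset.univ.image f = ∅)) = ∅ := by
        apply Finset.filter_eq_empty_iff.2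
        intro f _ h1
        simp at h1
        exact Finset.univ_nonempty.ne_empty h1
      rw [this]; simp
  | insert y T hy ih =>
    intro ι _
    set E := (Finset.univ : Finset (ι → β)).filter
        (fun f => Finset.univ.image f = insert y T) with hE
    set N := Fintype.card ι with hN
    have hez : 0 ≤ Real.exp z - 1 := by linarith [Real.add_one_le_exp z]
    have hfib : E.card = ∑ A ∈ (Finset.univ : Finset ι).powerset,
        (E.filter (fun f => Finset.univ.filter (fun i => f i = y) = A)).card :=
      Finset.card_eq_sum_card_fiberwise (fun f _ => by simp)
    have hone : ∀ A ∈ (Finset.univ : Finset ι).powerset,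
        ((E.filter (fun f => Finset.univ.filter (fun i => f i = y) = A)).card : ℝ) * z ^ N
          ≤ (fun k : ℕ => if k = 0 then 0 else
              z ^ k * ((N - k).factorial * (Real.exp z - 1) ^ T.card)) A.card := by
      intro A _
      by_cases hA : A.card = 0
      · have : E.filter (fun f => Finset.univ.filter (fun i => f i = y) = A) = ∅ := by
          rw [Finset.card_eq_zero] at hA
          subst hA
          apply Finset.filter_eq_empty_iff.2
          intro f hf h
          rw [hE, Finset.mem_filter] at hf
          have : y ∈ Finset.univ.image f := by rw [hf.2]; simp
          obtain ⟨i, -, hi⟩ := Finset.mem_image.1 this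
          have : i ∈ Finset.univ.filter (fun i => f i = y) := by simp [hi]
          rw [h] at this
          simp at this
        rw [this]; simp [hA]
      · simp only [hA, if_false]
        have hc : Fintype.card {i // i ∉ A} = N - A.card := by
          rw [Fintype.card_subtype_compl]; simp [hN]
        have h1 := ih {i // i ∉ A}
        rw [hc] at h1
        have h2 : (E.filter (fun f => Finset.univ.filter (fun i => f i = y) = A)).card ≤
            ((Finset.univ : Finset ({i // i ∉ A} → β)).filter
              (fun f => Finset.univ.image f = T)).card := by
          apply Finset.card_le_card_of_injOn (fun f i => f i.1)
          · intro f hf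
            simp only [Finset.coe_filter, Set.mem_ofPred_eq, hE, Finset.mem_filter,
              Finset.mem_univ, true_and] at hf ⊢
            obtain ⟨hf1, hf2⟩ := hf
            ext b
            simp only [Finset.mem_image, Finset.mem_univ, true_and]
            constructor
            · rintro ⟨⟨i, hi⟩, rfl⟩
              have h3 : f i ∈ insert y T := by rw [← hf1]; simp
              rw [← hf2] at hi
              simp at hi
              simpa [hi] using h3
            · intro hb
              have h3 : b ∈ Finset.univ.image f := by rw [hf1]; simp [hb]
              obtain ⟨i, -, hi⟩ := Finset.mem_image.1 h3
              refine ⟨⟨i, ?_⟩, hi⟩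
              rw [← hf2]; simp only [Finset.mem_filter, Finset.mem_univ, true_and]
              rintro rfl
              exact hy (hi ▸ hb)
          · intro f hf g hg hfg
            simp only [Finset.coe_filter, Set.mem_ofPred_eq] at hf hg
            ext i
            by_cases hi : i ∈ A
            · have h3 : f i = y := by
                have := hi; rw [← hf.2] at this; simpa using this
              have h4 : g i = y := by
                have := hi; rw [← hg.2] at this; simpa using this
              rw [h3, h4]
            · exact congrFun hfg ⟨i, hi⟩
        have hAN : A.card ≤ N := Finset.card_le_univ A
        calc ((E.filter (fun f => Finset.univ.filter (fun i => f i = y) = A)).card : ℝ) * z ^ N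
            = z ^ A.card * (((E.filter (fun f => Finset.univ.filter (fun i => f i = y) = A)).card : ℝ) * z ^ (N - A.card)) := by
              conv_lhs => rw [← Nat.add_sub_cancel' hAN, pow_add]
              ring
          _ ≤ _ := by
              apply mul_le_mul_of_nonneg_left _ (by positivity)
              refine le_trans ?_ h1
              apply mul_le_mul_of_nonneg_right _ (by positivity)
              refine Nat.cast_le.2 (h2.trans (le_of_eq ?_))
              congr!
    have hsum : ∑ k ∈ Finset.range (N + 1), (if k = 0 then 0 else z ^ k / (k.factorial : ℝ))
        ≤ Real.exp z - 1 := by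
      have := Real.sum_le_exp_of_nonneg hz.le (N + 1)
      rw [Finset.sum_range_succ'] at this ⊢
      simp at this ⊢
      linarith
    rw [hfib, Finset.card_insert_of_notMem hy]
    push_cast
    rw [Finset.sum_mul]
    refine (Finset.sum_le_sum hone).trans ?_
    rw [Finset.sum_powerset_apply_card (f := fun k : ℕ => if k = 0 then (0:ℝ) else
              z ^ k * ((N - k).factorial * (Real.exp z - 1) ^ T.card))]
    rw [Finset.card_univ, ← hN, pow_succ]
    calc _ = ∑ k ∈ Finset.range (N + 1), (N.factorial * (Real.exp z - 1) ^ T.card) *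
          (if k = 0 then 0 else z ^ k / (k.factorial : ℝ)) := by
          apply Finset.sum_congr rfl
          intro k hk
          have hk' : k ≤ N := by simpa [Nat.lt_succ_iff] using hk
          by_cases h0 : k = 0
          · simp [h0]
          · simp only [h0, if_false, nsmul_eq_mul]
            have := Nat.choose_mul_factorial_mul_factorial hk'
            rw [← this]
            push_cast
            field_simp
      _ ≤ _ := by
          rw [← Finset.mul_sum]
          have : (0:ℝ) ≤ N.factorial * (Real.exp z - 1) ^ T.card := by positivity
          nlinarith [mul_le_mul_of_nonneg_left hsum this]

/-! ### A minimal violation of Hall's condition -/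

/-- The neighbourhood `N(S)` of a set `S` of left vertices in the configuration `c`, where `c x j`
is the `j`-th choice of `x`. -/
def nbrs {n m d : ℕ} (c : Fin n → Fin d → Fin m) (S : Finset (Fin n)) : Finset (Fin m) :=
  S.biUnion (fun x => Finset.univ.image (c x))

/-- A configuration without a saturating matching has a violator `S` of deficiency exactly one inside
a prefix of the left vertices, such that every other vertex of the prefix has at least two distinct
neighbours outside `N(S)`. -/
theorem exists_violator {n m d : ℕ} (c : Fin n → Fin d → Fin m)
    (h : ¬ ∃ φ : Fin n → Fin m, Function.Injective φ ∧ ∀ x, ∃ j : Fin d, c x j = φ x) :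
    ∃ k ≤ n, ∃ S : Finset (Fin n), (∀ x ∈ S, (x : ℕ) < k) ∧
      (nbrs c S).card + 1 = S.card ∧
      ∀ x : Fin n, (x : ℕ) < k → x ∉ S →
        2 ≤ ((Finset.univ.image (c x)) \ nbrs c S).card := by
  have hall : ∃ S : Finset (Fin n), (nbrs c S).card < S.card := by
    by_contra! hcon
    apply h
    obtain ⟨φ, h1, h2⟩ := (Finset.all_card_le_biUnion_card_iff_exists_injective
      (fun x => Finset.univ.image (c x))).1 hcon
    exact ⟨φ, h1, fun x => by simpa using h2 x⟩
  -- `k` is the length of the shortest prefix containing a violator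
  have hk : ∃ k, ∃ S : Finset (Fin n), (∀ x ∈ S, (x : ℕ) < k) ∧ (nbrs c S).card < S.card := by
    obtain ⟨S, hS⟩ := hall
    exact ⟨n, S, fun x _ => x.2, hS⟩
  obtain ⟨k, hkspec, hkmin⟩ : ∃ k,
      (∃ S : Finset (Fin n), (∀ x ∈ S, (x : ℕ) < k) ∧ (nbrs c S).card < S.card) ∧
      ∀ j < k, ¬ ∃ S : Finset (Fin n), (∀ x ∈ S, (x : ℕ) < j) ∧ (nbrs c S).card < S.card :=
    ⟨Nat.find hk, Nat.find_spec hk, fun j hj => Nat.find_min hk hj⟩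
  have hkn : k ≤ n := by
    obtain ⟨S, hS⟩ := hall
    by_contra! hlt
    exact hkmin n hlt ⟨S, fun x _ => x.2, hS⟩
  set V := (Finset.univ : Finset (Finset (Fin n))).filter
    (fun S : Finset (Fin n) => (∀ x ∈ S, (x : ℕ) < k) ∧ (nbrs c S).card < S.card) with hV
  have hVne : V.Nonempty := by
    obtain ⟨S, hS⟩ := hkspec
    exact ⟨S, by simpa [hV] using hS⟩
  obtain ⟨S, hSV, hmax⟩ := Finset.exists_max_image V Finset.card hVne
  simp only [hV, Finset.mem_filter, Finset.mem_univ, true_and] at hSV hmax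
  -- Deleting the last vertex of the prefix from `S` leaves a set satisfying Hall's condition.
  have hdef : S.card ≤ (nbrs c S).card + 1 := by
    rcases Nat.eq_zero_or_pos k with h0 | hpos
    · have : S = ∅ := Finset.eq_empty_of_forall_notMem (fun x hx => by
        have := hSV.1 x hx; omega)
      simp [this]
    · have hlt : k - 1 < k := by omega
      have hno := hkmin (k - 1) hlt
      push Not at hno
      set S' := S.erase ⟨k - 1, by omega⟩ with hS'
      have h1 := hno S' (fun x hx => by
        rw [hS', Finset.mem_erase] at hx
        have h2 := hSV.1 x hx.2
        have h3 : (x : ℕ) ≠ k - 1 := fun h => hx.1 (Fin.ext h)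
        omega)
      have h2 : (nbrs c S').card ≤ (nbrs c S).card :=
        Finset.card_le_card (Finset.biUnion_subset_biUnion_of_subset_left _ (Finset.erase_subset _ _))
      have h3 : S.card - 1 ≤ S'.card := Finset.pred_card_le_card_erase
      omega
  refine ⟨k, hkn, S, hSV.1, by omega, ?_⟩
  intro x hxk hxS
  -- Otherwise `insert x S` would be a larger violator.
  by_contra! hcon
  have h1 : nbrs c (insert x S) = nbrs c S ∪ (Finset.univ.image (c x) \ nbrs c S) := by
    simp [nbrs, Finset.biUnion_insert, Finset.union_comm]
  have h2 : (nbrs c (insert x S)).card ≤ (nbrs c S).card + 1 := by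
    rw [h1]; exact (Finset.card_union_le _ _).trans (by omega)
  have h3 : (insert x S).card = S.card + 1 := Finset.card_insert_of_notMem hxS
  have h4 := hmax (insert x S) ⟨by
    intro y hy
    rcases Finset.mem_insert.1 hy with rfl | hy
    · exact hxk
    · exact hSV.1 y hy, by omega⟩
  omega

/-! ### The union bound -/

/-- The choices of one vertex (an ordered triple) with at least two distinct values outside `T`. -/
def goodTriples (m : ℕ) (T : Finset (Fin m)) : Finset (Fin 3 → Fin m) :=
  Finset.univ.filter (fun v => 2 ≤ (Finset.univ.image v \ T).card)

/-- At least two of the three coordinates of a good triple lie outside `T`. With `t = |T|` this leaves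
`(m-t)^3 + 3t(m-t)^2 = (m-t)^2 (m+2t)` triples. -/
theorem card_goodTriples_le (m : ℕ) (T : Finset (Fin m)) :
    (goodTriples m T).card ≤ (m - T.card) ^ 2 * (m + 2 * T.card) := by
  let P : Finset (Fin 3) → Finset (Fin 3 → Fin m) := fun J =>
    Fintype.piFinset (fun j => if j ∈ J then Tᶜ else T)
  have hsub : goodTriples m T ⊆ P {0, 1, 2} ∪ (P {0, 1} ∪ (P {0, 2} ∪ P {1, 2})) := by
    intro v hv
    simp only [goodTriples, Finset.mem_filter, Finset.mem_univ, true_and] at hv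
    by_contra hcon
    have h3 : (Finset.univ.image v \ T).card ≤ 1 := by
      rw [Finset.card_le_one]
      simp only [P, Finset.mem_union, Fintype.mem_piFinset, Fin.forall_fin_succ] at hcon
      simp at hcon
      intro a ha b hb
      simp only [Finset.mem_sdiff, Finset.mem_image, Finset.mem_univ, true_and] at ha hb
      obtain ⟨⟨i, rfl⟩, ha⟩ := ha
      obtain ⟨⟨j, rfl⟩, hb⟩ := hb
      fin_cases i <;> fin_cases j <;> simp at ha hb ⊢ <;> tauto
    omega
  have hT : T.card ≤ m := by simpa using Finset.card_le_univ T
  have hc : Tᶜ.card = m - T.card := by rw [Finset.card_compl]; simp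
  have h1 : (P {0, 1, 2}).card = (m - T.card) ^ 3 := by
    simp [P, Fintype.card_piFinset, Fin.prod_univ_three, hc]; ring
  have h2 : (P {0, 1}).card = (m - T.card) ^ 2 * T.card := by
    simp [P, Fintype.card_piFinset, Fin.prod_univ_three, hc]; left; ring
  have h3 : (P {0, 2}).card = (m - T.card) ^ 2 * T.card := by
    simp [P, Fintype.card_piFinset, Fin.prod_univ_three, hc]; ring
  have h4 : (P {1, 2}).card = (m - T.card) ^ 2 * T.card := by
    simp [P, Fintype.card_piFinset, Fin.prod_univ_three, hc]; ring
  have h5 := (Finset.card_le_card hsub).trans ((Finset.card_union_le _ _).trans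
    (Nat.add_le_add_left ((Finset.card_union_le _ _).trans
      (Nat.add_le_add_left (Finset.card_union_le _ _) _)) _))
  rw [h1, h2, h3, h4] at h5
  refine h5.trans (le_of_eq ?_)
  obtain ⟨r, hr⟩ := Nat.exists_eq_add_of_le hT
  have : m - T.card = r := by omega
  rw [this]
  have e : m + 2 * T.card = r + 3 * T.card := by omega
  rw [e]
  ring

/-- The configurations with `N(S) = T` in which every vertex below `k` outside `S` has at least two
distinct neighbours outside `T`. -/
def violatorEvent (n m k : ℕ) (S : Finset (Fin n)) (T : Finset (Fin m)) :
    Finset (Fin n → Fin 3 → Fin m) :=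
  Finset.univ.filter (fun c => nbrs c S = T ∧
    ∀ x : Fin n, (x : ℕ) < k → x ∉ S → c x ∈ goodTriples m T)

/-- The choices of different vertices are independent: those from `S` form a map onto `T`, each of
the other `k - |S|` vertices below `k` makes a good triple, and the remaining `n - k` are free. -/
theorem card_violatorEvent_le (n m k : ℕ) (hk : k ≤ n) (S : Finset (Fin n))
    (hS : ∀ x ∈ S, (x : ℕ) < k) (T : Finset (Fin m)) :
    (violatorEvent n m k S T).card ≤
      ((Finset.univ : Finset ({x // x ∈ S} × Fin 3 → Fin m)).filter
        (fun f => Finset.univ.image f = T)).card *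
      ((goodTriples m T).card ^ (k - S.card) * (m ^ 3) ^ (n - k)) := by
  have hprod : (Fintype.piFinset (fun x : {x // x ∉ S} =>
      if (x.1 : ℕ) < k then goodTriples m T else Finset.univ)).card
      = (goodTriples m T).card ^ (k - S.card) * (m ^ 3) ^ (n - k) := by
    rw [Fintype.card_piFinset]
    have e1 : ∀ x : {x // x ∉ S}, (if (x.1 : ℕ) < k then goodTriples m T else Finset.univ).card
        = (fun y : Fin n => if (y : ℕ) < k then (goodTriples m T).card else m ^ 3) x.1 := by
      intro x
      by_cases hx : (x.1 : ℕ) < k <;> simp [hx]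
    rw [Finset.prod_congr rfl (fun x _ => e1 x)]
    rw [← Finset.prod_subtype (Sᶜ) (fun x => by simp)
      (fun y : Fin n => if (y : ℕ) < k then (goodTriples m T).card else m ^ 3)]
    rw [Finset.prod_ite, Finset.prod_const, Finset.prod_const]
    have hU : (Finset.univ.filter (fun x : Fin n => (x : ℕ) < k)).card = k := by
      rw [Fin.card_filter_val_lt]; simp [hk]
    have hA : Finset.filter (fun x : Fin n => (x : ℕ) < k) Sᶜ
        = (Finset.univ.filter (fun x : Fin n => (x : ℕ) < k)) \ S := by
      ext x; simp [and_comm]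
    have hB : Finset.filter (fun x : Fin n => ¬ (x : ℕ) < k) Sᶜ
        = (Finset.univ.filter (fun x : Fin n => (x : ℕ) < k))ᶜ := by
      ext x; simp only [Finset.mem_filter, Finset.mem_compl, Finset.mem_univ, true_and]
      exact ⟨fun h => h.2, fun h => ⟨fun hx => h (hS x hx), h⟩⟩
    rw [hA, hB, Finset.card_compl, hU, Finset.card_sdiff_of_subset, hU]
    · simp
    · intro x hx; simpa using hS x hx
  rw [← hprod, ← Finset.card_product]
  apply Finset.card_le_card_of_injOn (fun c => (fun q => c q.1.1 q.2, fun x => c x.1))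
  · intro c hc
    simp only [violatorEvent, Finset.coe_filter, Set.mem_ofPred_eq, Finset.mem_univ, true_and] at hc
    simp only [Finset.coe_product, Set.mem_prod, Finset.mem_coe, Finset.mem_filter,
      Finset.mem_univ, true_and, Fintype.mem_piFinset]
    constructor
    · rw [← hc.1]
      ext y
      simp [nbrs]
    · intro x
      by_cases hx : (x.1 : ℕ) < k
      · simpa [hx] using hc.2 x.1 hx x.2
      · simp [hx]
  · intro c _ c' _ h
    simp only [Prod.mk.injEq] at h
    ext x j : 2
    by_cases hx : x ∈ S
    · exact congrFun h.1 (⟨x, hx⟩, j)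
    · exact congrFun (congrFun h.2 ⟨x, hx⟩) j

/-- Upper bound for the probability that a random triple is good when a fraction `x` of the right
vertices lies in `T`. -/
noncomputable def pTwo (x : ℝ) : ℝ := (1 - x) ^ 2 * (1 + 2 * x)

/-- The contribution of prefixes of length `k` and violators of size `s` to the union bound: the number
of pairs `(S, T)` with `|S| = s` and `|T| = s - 1`, times a bound for the probability of
`violatorEvent`, in which surjections are counted with `z = 3`. -/
noncomputable def unionTerm (m k s : ℕ) : ℝ :=
  (k.choose s : ℝ) * (m.choose (s - 1)) *
    ((3 * s).factorial * (Real.exp 3 - 1) ^ (s - 1) / 27 ^ s / (m : ℝ) ^ (3 * s)) *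
    pTwo (((s - 1 : ℕ) : ℝ) / m) ^ (k - s)

theorem card_violatorEvent_div_le (n m k s : ℕ) (hk : k ≤ n) (hm : 0 < m) (S : Finset (Fin n))
    (hS : ∀ x ∈ S, (x : ℕ) < k) (hs : S.card = s) (T : Finset (Fin m)) (hT : T.card = s - 1) :
    ((violatorEvent n m k S T).card : ℝ) / (m : ℝ) ^ (3 * n) ≤
      ((3 * s).factorial * (Real.exp 3 - 1) ^ (s - 1) / 27 ^ s / (m : ℝ) ^ (3 * s)) *
    pTwo (((s - 1 : ℕ) : ℝ) / m) ^ (k - s) := by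
  have hsk : s ≤ k := by
    have h1 : S ⊆ Finset.univ.filter (fun x : Fin n => (x : ℕ) < k) := by
      intro x hx; simpa using hS x hx
    have h2 := Finset.card_le_card h1
    rw [Fin.card_filter_val_lt] at h2
    rw [← hs]; exact h2.trans (min_le_right _ _)
  have h1 := card_violatorEvent_le n m k hk S hS T
  have h2 := surj_bound (β := Fin m) 3 (by norm_num) T ({x // x ∈ S} × Fin 3)
  have h3 := card_goodTriples_le m T
  have hcard : Fintype.card ({x // x ∈ S} × Fin 3) = 3 * s := by
    simp [hs]; ring
  rw [hcard, hT, pow_mul] at h2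
  norm_num at h2
  rw [hs] at h1
  rw [hT] at h3
  have htm : s - 1 ≤ m := by rw [← hT]; simpa using Finset.card_le_univ T
  have hm' : (0 : ℝ) < m := by exact_mod_cast hm
  have h4 : ((goodTriples m T).card : ℝ) ≤ pTwo (((s - 1 : ℕ) : ℝ) / m) * (m : ℝ) ^ 3 := by
    have : ((goodTriples m T).card : ℝ) ≤ (m - (s - 1 : ℕ) : ℝ) ^ 2 * (m + 2 * (s - 1 : ℕ)) := by
      rw [← Nat.cast_sub htm]; exact_mod_cast h3
    refine this.trans (le_of_eq ?_)
    unfold pTwo; field_simp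
  have h5 : ((violatorEvent n m k S T).card : ℝ) ≤
      (((Finset.univ : Finset ({x // x ∈ S} × Fin 3 → Fin m)).filter
        (fun f => Finset.univ.image f = T)).card : ℝ) *
      (((goodTriples m T).card : ℝ) ^ (k - s) * ((m : ℝ) ^ 3) ^ (n - k)) := by
    exact_mod_cast h1
  have h6 : (((Finset.univ : Finset ({x // x ∈ S} × Fin 3 → Fin m)).filter
        (fun f => Finset.univ.image f = T)).card : ℝ) ≤
        (3 * s).factorial * (Real.exp 3 - 1) ^ (s - 1) / 27 ^ s := by
    rw [le_div_iff₀ (by positivity)]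
    refine le_trans (le_of_eq ?_) h2
    congr!
  rw [div_le_iff₀ (by positivity)]
  refine h5.trans ?_
  have h7 : (m : ℝ) ^ (3 * n) = (m : ℝ) ^ (3 * s) * (((m : ℝ) ^ 3) ^ (k - s) * ((m : ℝ) ^ 3) ^ (n - k)) := by
    rw [← pow_mul, ← pow_mul, ← pow_add, ← pow_add]; congr 1; omega
  rw [h7]
  have he : 0 ≤ Real.exp 3 - 1 := by linarith [Real.add_one_le_exp (3:ℝ)]
  calc _ ≤ ((3 * s).factorial * (Real.exp 3 - 1) ^ (s - 1) / 27 ^ s) *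
      ((pTwo (((s - 1 : ℕ) : ℝ) / m) * (m : ℝ) ^ 3) ^ (k - s) * ((m : ℝ) ^ 3) ^ (n - k)) := by
        gcongr
    _ = _ := by
        rw [mul_pow]; field_simp

/-- The configurations with no matching saturating the left side. -/
noncomputable def badConfigs (n m d : ℕ) : Finset (Fin n → Fin d → Fin m) :=
  Finset.univ.filter (fun c => ¬ ∃ φ : Fin n → Fin m,
    Function.Injective φ ∧ ∀ x, ∃ j : Fin d, c x j = φ x)

theorem bad_le_sum (n m : ℕ) (hm : 0 < m) :
    ((badConfigs n m 3).card : ℝ) / (m : ℝ) ^ (3 * n) ≤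
      ∑ k ∈ Finset.range (n + 1), ∑ s ∈ Finset.Icc 2 k, unionTerm m k s := by
  let U : ℕ → Finset (Fin n) := fun k => Finset.univ.filter (fun x : Fin n => (x : ℕ) < k)
  have hsub : badConfigs n m 3 ⊆ (Finset.range (n + 1)).biUnion (fun k =>
      (Finset.Icc 2 k).biUnion (fun s => ((U k).powersetCard s).biUnion (fun S =>
        ((Finset.univ : Finset (Fin m)).powersetCard (s - 1)).biUnion (fun T =>
          violatorEvent n m k S T)))) := by
    intro c hc
    simp only [badConfigs, Finset.mem_filter, Finset.mem_univ, true_and] at hc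
    obtain ⟨k, hk, S, hSk, hcard, hout⟩ := exists_violator c hc
    have hSU : S ⊆ U k := by intro x hx; simpa [U] using hSk x hx
    have hUk : (U k).card ≤ k := by
      simp only [U]; rw [Fin.card_filter_val_lt]; exact min_le_right _ _
    have hpos : 0 < (nbrs c S).card := by
      have : S.Nonempty := Finset.card_pos.1 (by omega)
      obtain ⟨x, hx⟩ := this
      exact Finset.card_pos.2 ⟨c x 0, Finset.mem_biUnion.2 ⟨x, hx, by simp⟩⟩
    have := Finset.card_le_card hSU
    simp only [Finset.mem_biUnion, Finset.mem_range, Finset.mem_Icc, Finset.mem_powersetCard]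
    refine ⟨k, by omega, S.card, ⟨by omega, by omega⟩, S, ⟨hSU, rfl⟩, nbrs c S,
      ⟨Finset.subset_univ _, by omega⟩, ?_⟩
    simp only [violatorEvent, Finset.mem_filter, Finset.mem_univ, true_and, goodTriples]
    exact fun x hx hxS => hout x hx hxS
  have h1 : (badConfigs n m 3).card ≤ ∑ k ∈ Finset.range (n + 1), ∑ s ∈ Finset.Icc 2 k,
      ∑ S ∈ (U k).powersetCard s, ∑ T ∈ (Finset.univ : Finset (Fin m)).powersetCard (s - 1),
        (violatorEvent n m k S T).card := by
    refine (Finset.card_le_card hsub).trans ?_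
    refine Finset.card_biUnion_le.trans (Finset.sum_le_sum fun k _ => ?_)
    refine Finset.card_biUnion_le.trans (Finset.sum_le_sum fun s _ => ?_)
    refine Finset.card_biUnion_le.trans (Finset.sum_le_sum fun S _ => ?_)
    exact Finset.card_biUnion_le
  have h2 : ((badConfigs n m 3).card : ℝ) / (m : ℝ) ^ (3 * n) ≤
      ∑ k ∈ Finset.range (n + 1), ∑ s ∈ Finset.Icc 2 k,
      ∑ S ∈ (U k).powersetCard s, ∑ T ∈ (Finset.univ : Finset (Fin m)).powersetCard (s - 1),
        ((violatorEvent n m k S T).card : ℝ) / (m : ℝ) ^ (3 * n) := by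
    simp only [← Finset.sum_div]
    gcongr
    exact_mod_cast h1
  refine h2.trans (Finset.sum_le_sum fun k hk => Finset.sum_le_sum fun s _ => ?_)
  have hkn : k ≤ n := by simpa [Nat.lt_succ_iff] using hk
  have hUk : (U k).card = k := by
    simp only [U]; rw [Fin.card_filter_val_lt]; exact min_eq_right hkn
  calc _ ≤ ∑ S ∈ (U k).powersetCard s, ∑ T ∈ (Finset.univ : Finset (Fin m)).powersetCard (s - 1),
        (((3 * s).factorial * (Real.exp 3 - 1) ^ (s - 1) / 27 ^ s / (m : ℝ) ^ (3 * s)) *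
          pTwo (((s - 1 : ℕ) : ℝ) / m) ^ (k - s)) := by
        refine Finset.sum_le_sum fun S hS => Finset.sum_le_sum fun T hT => ?_
        rw [Finset.mem_powersetCard] at hS hT
        exact card_violatorEvent_div_le n m k s hkn hm S
          (fun x hx => by simpa [U] using hS.1 hx) hS.2 T hT.2
    _ = unionTerm m k s := by
        simp only [Finset.sum_const, Finset.card_powersetCard, hUk, Finset.card_univ,
          Fintype.card_fin, nsmul_eq_mul, unionTerm]
        ring

/-! ### The exponent of the union bound is negative -/

/-- The exponential rate, per right vertex, of the union-bound terms with `s = x * m`. It is the sum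
of the rates of `choose k s * pTwo x ^ (k - s)` with `k` replaced by its upper bound `41/50 * m`,
of `choose m s`, and of the surjection factor. -/
noncomputable def rate (x : ℝ) : ℝ :=
  41/50 * Real.log (41/50) + x * Real.log x - (41/50 - x) * Real.log (41/50 - x)
    - (1 - x) * Real.log (1 - x)
    + (41/50 - x) * (2 * Real.log (1 - x) + Real.log (1 + 2 * x))
    + x * Real.log (1 - Real.exp (-3))

theorem exp_neg_three_bounds : 0.0497 < Real.exp (-3) ∧ Real.exp (-3) < 0.0499 := by
  have h1 := Real.exp_one_gt_d9
  have h2 := Real.exp_one_lt_d9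
  have h3 : Real.exp 3 = Real.exp 1 ^ 3 := by rw [← Real.exp_nat_mul]; norm_num
  have h4 : (20.08:ℝ) < Real.exp 3 := by
    rw [h3]; calc (20.08:ℝ) < 2.7182818283 ^ 3 := by norm_num
      _ < _ := by gcongr
  have h5 : Real.exp 3 < (20.09:ℝ) := by
    rw [h3]; calc _ < (2.7182818286:ℝ) ^ 3 := by gcongr
      _ < _ := by norm_num
  have h6 : Real.exp (-3) * Real.exp 3 = 1 := by rw [← Real.exp_add]; simp
  have h7 := Real.exp_pos (-3)
  constructor <;> nlinarith

/-- Certificates for numerical bounds on `log x` with value in `[0, 1]`: compare `x` with the Taylor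
polynomial of `exp`, without or with its remainder. -/
theorem log_bounds (x y : ℝ) (hx : 0 < x) (hy0 : 0 ≤ y) (hy1 : y ≤ 1) :
    (x ≤ ∑ i ∈ Finset.range 9, y ^ i / (i.factorial : ℝ) → Real.log x ≤ y) ∧
    (∑ i ∈ Finset.range 9, y ^ i / (i.factorial : ℝ) +
      y ^ 9 * (9 + 1) / ((Nat.factorial 9 : ℕ) * 9) ≤ x → y ≤ Real.log x) := by
  constructor
  · intro h
    rw [Real.log_le_iff_le_exp hx]
    exact h.trans (Real.sum_le_exp_of_nonneg hy0 9)
  · intro h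
    rw [Real.le_log_iff_exp_le hx]
    refine le_trans ?_ h
    have := Real.exp_bound' hy0 hy1 (n := 9) (by norm_num)
    exact_mod_cast this

theorem log_082 : Real.log (41/50) ≤ -0.1984 := by
  have := (log_bounds (50/41) 0.1984 (by norm_num) (by norm_num) (by norm_num)).2
    (by norm_num [Finset.sum_range_succ, Nat.factorial])
  rw [show (41/50:ℝ) = (50/41)⁻¹ by norm_num, Real.log_inv]; linarith

theorem log_074 : Real.log (37/50) ≤ -0.3010 := by
  have := (log_bounds (50/37) 0.3010 (by norm_num) (by norm_num) (by norm_num)).2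
    (by norm_num [Finset.sum_range_succ, Nat.factorial])
  rw [show (37/50:ℝ) = (50/37)⁻¹ by norm_num, Real.log_inv]; linarith

theorem log_two_le : Real.log 2 ≤ 0.69315 := by linarith [Real.log_two_lt_d9]

theorem log_two_ge : 0.69314 ≤ Real.log 2 := by linarith [Real.log_two_gt_d9]

theorem log_008 : -2.526 ≤ Real.log (2/25) := by
  have h := (log_bounds (32/25) 0.2467 (by norm_num) (by norm_num) (by norm_num)).2
    (by norm_num [Finset.sum_range_succ, Nat.factorial])
  have : Real.log (2/25) = Real.log (32/25) - 4 * Real.log 2 := by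
    rw [show (2/25:ℝ) = (32/25) / 2 ^ 4 by norm_num, Real.log_div (by norm_num) (by norm_num),
      Real.log_pow]; norm_num
  linarith [log_two_le]

theorem log_026 : -1.3475 ≤ Real.log (13/50) ∧ Real.log (13/50) ≤ -1.3470 := by
  have h := log_bounds (26/25) 0.0391 (by norm_num) (by norm_num) (by norm_num)
  have h' := log_bounds (26/25) 0.03925 (by norm_num) (by norm_num) (by norm_num)
  have h1 := h.2 (by norm_num [Finset.sum_range_succ, Nat.factorial])
  have h2 := h'.1 (by norm_num [Finset.sum_range_succ, Nat.factorial])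
  have : Real.log (13/50) = Real.log (26/25) - 2 * Real.log 2 := by
    rw [show (13/50:ℝ) = (26/25) / 2 ^ 2 by norm_num, Real.log_div (by norm_num) (by norm_num),
      Real.log_pow]; norm_num
  constructor <;> linarith [log_two_le, log_two_ge]

theorem log_248 : Real.log (62/25) ≤ 0.9085 :=
  (log_bounds (62/25) 0.9085 (by norm_num) (by norm_num) (by norm_num)).1
    (by norm_num [Finset.sum_range_succ, Nat.factorial])

theorem log_0091 : -2.3975 ≤ Real.log (91/1000) := by
  have h := (log_bounds (182/125) 0.3752 (by norm_num) (by norm_num) (by norm_num)).2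
    (by norm_num [Finset.sum_range_succ, Nat.factorial])
  have : Real.log (91/1000) = Real.log (182/125) - 4 * Real.log 2 := by
    rw [show (91/1000:ℝ) = (182/125) / 2 ^ 4 by norm_num, Real.log_div (by norm_num) (by norm_num),
      Real.log_pow]; norm_num
  linarith [log_two_le]

theorem log_01 : Real.log (1/10) ≤ -2.3022 := by
  have h := (log_bounds (8/5) 0.4702 (by norm_num) (by norm_num) (by norm_num)).1
    (by norm_num [Finset.sum_range_succ, Nat.factorial])
  have : Real.log (1/10) = Real.log (8/5) - 4 * Real.log 2 := by
    rw [show (1/10:ℝ) = (8/5) / 2 ^ 4 by norm_num, Real.log_div (by norm_num) (by norm_num),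
      Real.log_pow]; norm_num
  linarith [log_two_ge]

theorem log_016 : Real.log (4/25) ≤ -1.83 := by
  have h := (log_bounds (32/25) 0.249 (by norm_num) (by norm_num) (by norm_num)).1
    (by norm_num [Finset.sum_range_succ, Nat.factorial])
  have : Real.log (4/25) = Real.log (32/25) - 3 * Real.log 2 := by
    rw [show (4/25:ℝ) = (32/25) / 2 ^ 3 by norm_num, Real.log_div (by norm_num) (by norm_num),
      Real.log_pow]; norm_num
  linarith [log_two_ge]

theorem log_surj_bounds : -0.053 ≤ Real.log (1 - Real.exp (-3)) ∧
    Real.log (1 - Real.exp (-3)) ≤ -0.0497 := by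
  obtain ⟨h1, h2⟩ := exp_neg_three_bounds
  have h3 : 0 < 1 - Real.exp (-3) := by linarith
  constructor
  · have := Real.one_sub_inv_le_log_of_pos h3
    have h4 : (1 - Real.exp (-3))⁻¹ ≤ 1.053 := by
      rw [inv_le_comm₀ h3 (by norm_num)]
      have : (1.053:ℝ)⁻¹ ≤ 0.9501 := by norm_num
      linarith
    linarith
  · linarith [Real.log_le_sub_one_of_pos h3]

/-- For small `x` the term `x * log x` of `rate` dominates; all the others are at most linear. -/
theorem rate_le_small (x : ℝ) (h0 : 0 < x) (h1 : x ≤ 1/2) :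
    rate x ≤ x * (Real.log x + 1.82) := by
  have hA : Real.log (41/50) ≤ -0.18 := by linarith [log_082]
  have e1 : (41/50 - x) * (Real.log (41/50) - Real.log (41/50 - x)) ≤ x := by
    have hp : 0 < 41/50 - x := by linarith
    rw [← Real.log_div (by norm_num) hp.ne']
    have := Real.log_le_sub_one_of_pos (show 0 < (41/50) / (41/50 - x) by positivity)
    calc _ ≤ (41/50 - x) * ((41/50) / (41/50 - x) - 1) := by gcongr
      _ = x := by rw [mul_sub, mul_div_cancel₀ _ hp.ne']; ring
  have e2 : -((1 - x) * Real.log (1 - x)) ≤ x := by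
    have hp : 0 < 1 - x := by linarith
    have := Real.one_sub_inv_le_log_of_pos hp
    have h2 := mul_le_mul_of_nonneg_left this hp.le
    have h3 : (1 - x) * (1 - (1 - x)⁻¹) = -x := by field_simp; ring
    linarith
  have e3 : (41/50 - x) * (2 * Real.log (1 - x) + Real.log (1 + 2 * x)) ≤ 0 := by
    have i1 := Real.log_le_sub_one_of_pos (show 0 < 1 - x by linarith)
    have i2 := Real.log_le_sub_one_of_pos (show 0 < 1 + 2 * x by linarith)
    exact mul_nonpos_of_nonneg_of_nonpos (by linarith) (by linarith)
  have e4 : x * Real.log (1 - Real.exp (-3)) ≤ 0 :=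
    mul_nonpos_of_nonneg_of_nonpos h0.le (by linarith [log_surj_bounds.2])
  have e5 : x * Real.log (41/50) ≤ x * (-0.18) := by gcongr
  unfold rate
  linarith

/-- The expression through which `x` enters the derivative of `rate`. -/
noncomputable def gRatio (x : ℝ) : ℝ := x * (41/50 - x) / ((1 - x) * (1 + 2 * x))

theorem rate_hasDerivAt (x : ℝ) (h0 : 0 < x) (h1 : x < 41/50) :
    HasDerivAt rate (3 + Real.log (1 - Real.exp (-3)) + Real.log (gRatio x) - 6 * gRatio x) x := by
  have a1 : 0 < 41/50 - x := by linarith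
  have a2 : 0 < 1 - x := by linarith
  have a3 : 0 < 1 + 2 * x := by linarith
  have d0 := hasDerivAt_id x
  have dA := (d0.const_sub (41/50))
  have dB := (d0.const_sub 1)
  have dC := ((d0.const_mul 2).const_add 1)
  have l0 := d0.log h0.ne'
  have lA := dA.log a1.ne'
  have lB := dB.log a2.ne'
  have lC := dC.log a3.ne'
  have key := (((((d0.mul l0).const_add (41/50 * Real.log (41/50))).sub (dA.mul lA)).sub
    (dB.mul lB)).add (dA.mul ((lB.const_mul 2).add lC))).add
    (d0.mul_const (Real.log (1 - Real.exp (-3))))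
  refine key.congr_deriv ?_
  have hl : Real.log (gRatio x) = Real.log x + Real.log (41/50 - x) - (Real.log (1 - x) + Real.log (1 + 2 * x)) := by
    unfold gRatio
    rw [Real.log_div (by positivity) (by positivity), Real.log_mul (by positivity) (by positivity),
      Real.log_mul (by positivity) (by positivity)]
  rw [hl]
  have q1 : (41/50 - x) * (-1 / (41/50 - x)) = -1 := by rw [mul_div_cancel₀ _ a1.ne']
  simp only [id, gRatio, Pi.add_apply, q1]
  field_simp
  ring

theorem gRatio_pos (x : ℝ) (h0 : 0 < x) (h1 : x < 41/50) : 0 < gRatio x := by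
  have a1 : 0 < 41/50 - x := by linarith
  have a2 : 0 < 1 - x := by linarith
  unfold gRatio; positivity

/-- `g ↦ log g - 6 * g` increases up to `g = 1/6`, and `gRatio` takes values in `[91/1000, 1/6]` here. -/
theorem rate_deriv_nonneg (x : ℝ) (h0 : 4/25 ≤ x) (h1 : x ≤ 37/50) :
    0 ≤ 3 + Real.log (1 - Real.exp (-3)) + Real.log (gRatio x) - 6 * gRatio x := by
  have hg := gRatio_pos x (by linarith) (by linarith)
  have hden : 0 < (1 - x) * (1 + 2 * x) := mul_pos (by linarith) (by linarith)
  have g1 : gRatio x ≤ 1/6 := by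
    unfold gRatio; rw [div_le_iff₀ hden]; nlinarith [sq_nonneg (x - 49/100)]
  have g2 : 91/1000 ≤ gRatio x := by
    unfold gRatio; rw [le_div_iff₀ hden]; nlinarith [mul_nonneg (sub_nonneg.2 h0) (sub_nonneg.2 h1)]
  have h2 := Real.one_sub_inv_le_log_of_pos (show 0 < gRatio x / (91/1000) by positivity)
  rw [Real.log_div hg.ne' (by norm_num), inv_div] at h2
  have h3 : 6 * (gRatio x - 91/1000) ≤ 1 - 91/1000 / gRatio x := by
    rw [show 1 - 91/1000 / gRatio x = (gRatio x - 91/1000) / gRatio x by field_simp,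
      le_div_iff₀ hg]
    nlinarith
  linarith [log_0091, log_surj_bounds.1]

theorem rate_deriv_le (x : ℝ) (h0 : 37/50 ≤ x) (h1 : x < 41/50) :
    3 + Real.log (1 - Real.exp (-3)) + Real.log (gRatio x) - 6 * gRatio x ≤ 0.05 := by
  have hg := gRatio_pos x (by linarith) (by linarith)
  have hden : 0 < (1 - x) * (1 + 2 * x) := mul_pos (by linarith) (by linarith)
  have g2 : gRatio x ≤ 1/10 := by
    unfold gRatio; rw [div_le_iff₀ hden]; nlinarith
  have h2 := Real.log_le_sub_one_of_pos (show 0 < gRatio x / (1/10) by positivity)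
  rw [Real.log_div hg.ne' (by norm_num)] at h2
  linarith [log_01, log_surj_bounds.2]

theorem rate_at : rate (37/50) ≤ -0.0095 := by
  unfold rate
  norm_num only
  have := log_026
  linarith [log_082, log_074, log_008, log_026.1, log_026.2, log_248, log_surj_bounds.2]

/-- `rate` increases up to `37/50` and has slope at most `0.05` beyond, so its value at `37/50`
controls it on the whole interval. -/
theorem rate_le_large (x : ℝ) (h0 : 4/25 ≤ x) (h1 : x < 41/50) : rate x ≤ -0.005 := by
  rcases le_total x (37/50) with h | h
  · have hmono : MonotoneOn rate (Set.Icc (4/25) (37/50)) := by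
      apply monotoneOn_of_hasDerivWithinAt_nonneg (convex_Icc _ _)
        (f' := fun x => 3 + Real.log (1 - Real.exp (-3)) + Real.log (gRatio x) - 6 * gRatio x)
      · intro y hy
        exact (rate_hasDerivAt y (by linarith [hy.1]) (by linarith [hy.2])).continuousAt.continuousWithinAt
      · intro y hy
        rw [interior_Icc] at hy
        exact (rate_hasDerivAt y (by linarith [hy.1]) (by linarith [hy.2])).hasDerivWithinAt
      · intro y hy
        rw [interior_Icc] at hy
        exact rate_deriv_nonneg y hy.1.le hy.2.le
    have := hmono ⟨h0, h⟩ ⟨by norm_num, le_rfl⟩ h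
    linarith [rate_at]
  · have hanti : AntitoneOn (fun y => rate y - 0.05 * y) (Set.Ico (37/50) (41/50)) := by
      apply antitoneOn_of_hasDerivWithinAt_nonpos (convex_Ico _ _)
        (f' := fun x => 3 + Real.log (1 - Real.exp (-3)) + Real.log (gRatio x) - 6 * gRatio x - 0.05)
      · intro y hy
        exact ((rate_hasDerivAt y (by linarith [hy.1]) (by linarith [hy.2])).continuousAt.sub
          (by fun_prop)).continuousWithinAt
      · intro y hy
        rw [interior_Ico] at hy
        exact (((rate_hasDerivAt y (by linarith [hy.1]) (by linarith [hy.2])).sub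
          ((hasDerivAt_id y).const_mul 0.05)).congr_deriv (by ring)).hasDerivWithinAt
      · intro y hy
        rw [interior_Ico] at hy
        linarith [rate_deriv_le y hy.1.le hy.2]
    have := hanti ⟨le_rfl, by norm_num⟩ ⟨h, h1⟩ h
    simp only at this
    linarith [rate_at]

theorem rate_le_mid (x : ℝ) (h0 : 1/20 ≤ x) (h1 : x < 41/50) : rate x ≤ -0.0004 := by
  rcases le_total (4/25) x with h | h
  · linarith [rate_le_large x h h1]
  · have e := rate_le_small x (by linarith) (by linarith)
    have : Real.log x ≤ -1.83 := (Real.log_le_log (by linarith) h).trans log_016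
    nlinarith

/-! ### Estimating one term of the union bound -/

theorem pTwo_pos {x : ℝ} (h0 : 0 ≤ x) (h1 : x < 1) : 0 < pTwo x := by
  have : 0 < 1 - x := by linarith
  unfold pTwo; positivity

theorem pow_eq_exp_log {u : ℝ} (hu : 0 < u) (n : ℕ) : u ^ n = Real.exp (n * Real.log u) := by
  rw [Real.exp_nat_mul, Real.exp_log hu]

/-- The binomial theorem gives `choose k s * p ^ (k - s) * u ^ s ≤ (u + p) ^ k` for each `u > 0`.
The chosen `u` satisfies `u + p ≥ 1`, so that `k` may be replaced by its upper bound `41/50 * m`. -/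
theorem choose_mul_pTwo_le (m k s : ℕ) (hs : 0 < s) (hsk : s ≤ k) (hm : 0 < m)
    (hk : (k : ℝ) < 41/50 * m) (x : ℝ) (hx : x = s / m) :
    (k.choose s : ℝ) * pTwo x ^ (k - s) ≤
      Real.exp (m * (41/50 * Real.log (41/50) - (41/50 - x) * Real.log (41/50 - x)
        - x * Real.log x + (41/50 - x) * (2 * Real.log (1 - x) + Real.log (1 + 2 * x)))) := by
  have hm' : (0:ℝ) < m := by exact_mod_cast hm
  have hs' : (0:ℝ) < s := by exact_mod_cast hs
  have hx0 : 0 < x := by rw [hx]; positivity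
  have hsk' : (s:ℝ) ≤ k := by exact_mod_cast hsk
  have hx1 : x < 41/50 := by rw [hx, div_lt_iff₀ hm']; linarith
  have ha : 0 < 41/50 - x := by linarith
  have hb : 0 < 1 - x := by linarith
  have hc : 0 < 1 + 2 * x := by linarith
  have hp := pTwo_pos hx0.le (by linarith : x < 1)
  set p := pTwo x with hpdef
  have hlogp : Real.log p = 2 * Real.log (1 - x) + Real.log (1 + 2 * x) := by
    rw [hpdef, pTwo, Real.log_mul (by positivity) hc.ne', Real.log_pow]; norm_num
  -- This `u` minimises `(u + p) ^ (41/50 * m) * u ^ (-s)`.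
  set u := p * x / (41/50 - x) with hu
  have hupos : 0 < u := by positivity
  have hup : u + p = p * (41/50) / (41/50 - x) := by
    rw [hu, eq_div_iff ha.ne', add_mul, div_mul_cancel₀ _ ha.ne']; ring
  have hup1 : 1 ≤ u + p := by
    rw [hup, le_div_iff₀ ha, hpdef, pTwo]
    nlinarith [mul_nonneg hx0.le (sq_nonneg (x - 3/4))]
  have h1 : (k.choose s : ℝ) * p ^ (k - s) * u ^ s ≤ (u + p) ^ k := by
    rw [add_pow]
    have := Finset.single_le_sum (f := fun i => u ^ i * p ^ (k - i) * (k.choose i : ℝ))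
      (fun i _ => by positivity) (Finset.mem_range.2 (Nat.lt_succ_of_le hsk))
    linarith
  have h2 : (u + p) ^ k ≤ Real.exp (41/50 * m * Real.log (u + p)) := by
    rw [pow_eq_exp_log (by positivity)]
    exact Real.exp_le_exp.2 (mul_le_mul_of_nonneg_right hk.le (Real.log_nonneg hup1))
  have h3 : (k.choose s : ℝ) * p ^ (k - s) ≤
      Real.exp (41/50 * m * Real.log (u + p) - s * Real.log u) := by
    rw [Real.exp_sub, ← pow_eq_exp_log hupos, le_div_iff₀ (by positivity)]
    exact h1.trans h2
  refine h3.trans (le_of_eq ?_)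
  have hsx : (s : ℝ) = m * x := by rw [hx]; field_simp
  rw [hup, hu, Real.log_div (by positivity) ha.ne', Real.log_div (by positivity) ha.ne',
    Real.log_mul hp.ne' (by norm_num), Real.log_mul hp.ne' hx0.ne', hlogp, hsx]
  congr 1; ring

/-- The entropy bound for binomial coefficients: `choose m s * x ^ s * (1 - x) ^ (m - s)` is one term
of the expansion of `(x + (1 - x)) ^ m = 1`. -/
theorem choose_le_exp (m s : ℕ) (hs : 0 < s) (hm : 0 < m) (x : ℝ) (hx : x = s / m) (hx1 : x < 1) :
    (m.choose s : ℝ) ≤ Real.exp (m * (- (x * Real.log x) - (1 - x) * Real.log (1 - x))) := by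
  have hm' : (0:ℝ) < m := by exact_mod_cast hm
  have hs' : (0:ℝ) < s := by exact_mod_cast hs
  have hx0 : 0 < x := by rw [hx]; positivity
  have hb : 0 < 1 - x := by linarith
  have hsx : (s : ℝ) = m * x := by rw [hx]; field_simp
  have hsm : s ≤ m := by
    have : (s : ℝ) ≤ m := by rw [hsx]; nlinarith
    exact_mod_cast this
  have h1 : (m.choose s : ℝ) * (x ^ s * (1 - x) ^ (m - s)) ≤ 1 := by
    have h2 := add_pow x (1 - x) m
    have := Finset.single_le_sum (f := fun i => x ^ i * (1 - x) ^ (m - i) * (m.choose i : ℝ))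
      (fun i _ => by positivity) (Finset.mem_range.2 (Nat.lt_succ_of_le hsm))
    rw [← h2] at this
    simp at this
    linarith
  rw [pow_eq_exp_log hx0, pow_eq_exp_log hb, ← Real.exp_add, ← le_div_iff₀ (Real.exp_pos _),
    one_div, ← Real.exp_neg] at h1
  refine h1.trans (le_of_eq ?_)
  rw [Nat.cast_sub hsm, hsx]
  congr 1; ring

/-- The elementary Stirling bound `n! ≤ e n (n / e) ^ n`. -/
theorem factorial_le_exp (n : ℕ) (hn : 0 < n) :
    (n.factorial : ℝ) ≤ n * Real.exp 1 * (n / Real.exp 1) ^ n := by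
  induction n, hn using Nat.le_induction with
  | base => simp
  | succ n hn ih =>
    have hn' : (0:ℝ) < n := by exact_mod_cast hn
    have h1 : Real.exp 1 ≤ ((n + 1 : ℝ) / n) ^ (n + 1) := by
      have hpos : (0:ℝ) < (n + 1 : ℝ) / n := by positivity
      rw [pow_eq_exp_log hpos]
      apply Real.exp_le_exp.2
      have := Real.one_sub_inv_le_log_of_pos hpos
      have h2 : 1 - ((n + 1 : ℝ) / n)⁻¹ = 1 / (n + 1) := by field_simp; ring
      rw [h2] at this
      push_cast
      calc (1:ℝ) = (n + 1) * (1 / (n + 1)) := by field_simp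
        _ ≤ _ := by gcongr
    rw [Nat.factorial_succ]
    push_cast
    have he := Real.exp_pos 1
    calc ((n:ℝ) + 1) * n.factorial ≤ (n + 1) * (n * Real.exp 1 * (n / Real.exp 1) ^ n) := by gcongr
      _ = (n + 1) * (Real.exp 1 * (n ^ (n + 1) / Real.exp 1 ^ (n + 1)) * Real.exp 1) := by
          rw [div_pow]; field_simp; ring
      _ ≤ (n + 1) * (Real.exp 1 * (n ^ (n + 1) / Real.exp 1 ^ (n + 1)) * ((n + 1 : ℝ) / n) ^ (n + 1)) := by
          gcongr
      _ = _ := by rw [div_pow, div_pow]; field_simp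

/-- With `x = s / m`, Stirling turns `(3s)! (e ^ 3 - 1) ^ s / (27 ^ s m ^ (3s))` into
`(x ^ 3 (1 - e ^ (-3))) ^ s`, up to the factor `3s`. One factor `e` is absorbed in `e ^ 3 - 1`. -/
theorem surj_factor_le (m s : ℕ) (hs : 0 < s) (hm : 0 < m) (x : ℝ) (hx : x = s / m) :
    ((3 * s).factorial * (Real.exp 3 - 1) ^ (s - 1) / 27 ^ s / (m : ℝ) ^ (3 * s)) ≤
      3 * s * Real.exp (m * (3 * (x * Real.log x) + x * Real.log (1 - Real.exp (-3)))) := by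
  have hm' : (0:ℝ) < m := by exact_mod_cast hm
  have hs' : (0:ℝ) < s := by exact_mod_cast hs
  have hx0 : 0 < x := by rw [hx]; positivity
  have hsx : (s : ℝ) = m * x := by rw [hx]; field_simp
  have h1 := factorial_le_exp (3 * s) (by omega)
  have he3 : Real.exp 3 = Real.exp 1 ^ 3 := by rw [← Real.exp_nat_mul]; norm_num
  have hq : 0 < 1 - Real.exp (-3) := by linarith [exp_neg_three_bounds.2]
  have he : Real.exp 3 - 1 = Real.exp 3 * (1 - Real.exp (-3)) := by
    rw [mul_sub, ← Real.exp_add]; simp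
  have he1 : Real.exp 1 ≤ Real.exp 3 - 1 := by
    rw [he3]; nlinarith [Real.exp_one_gt_d9, sq_nonneg (Real.exp 1 - 2)]
  have hepos := Real.exp_pos 1
  have hrhs : Real.exp (m * (3 * (x * Real.log x) + x * Real.log (1 - Real.exp (-3)))) =
      x ^ (3 * s) * (1 - Real.exp (-3)) ^ s := by
    rw [pow_eq_exp_log hx0, pow_eq_exp_log hq, ← Real.exp_add]
    push_cast; rw [hsx]; congr 1; ring
  rw [hrhs, div_le_iff₀ (by positivity), div_le_iff₀ (by positivity)]
  have he0 : 0 ≤ Real.exp 3 - 1 := by linarith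
  calc _ ≤ (((3 * s : ℕ) : ℝ) * Real.exp 1 * (((3 * s : ℕ) : ℝ) / Real.exp 1) ^ (3 * s)) *
          (Real.exp 3 - 1) ^ (s - 1) := by
        gcongr
    _ ≤ (((3 * s : ℕ) : ℝ) * (Real.exp 3 - 1) * (((3 * s : ℕ) : ℝ) / Real.exp 1) ^ (3 * s)) * (Real.exp 3 - 1) ^ (s - 1) := by
        gcongr
    _ = ((3 * s : ℕ) : ℝ) * (((3 * s : ℕ) : ℝ) / Real.exp 1) ^ (3 * s) * (Real.exp 3 - 1) ^ s := by
        obtain ⟨r, rfl⟩ := Nat.exists_eq_succ_of_ne_zero hs.ne'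
        simp only [Nat.succ_sub_one, Nat.succ_eq_add_one, pow_succ]; ring
    _ = _ := by
        rw [he, mul_pow, he3, ← pow_mul, div_pow]
        push_cast
        rw [mul_pow, hx, div_pow, pow_mul 3 3 s]
        field_simp
        norm_num

/-- Replacing `|T| = s - 1` by `s` costs a bounded factor, because `pTwo` is Lipschitz and bounded
below on `[0, 41/50]`. -/
theorem pTwo_shift (m k s : ℕ) (hs : 0 < s) (hsk : s ≤ k) (hm : 0 < m)
    (hk : (k : ℝ) < 41/50 * m) :
    pTwo (((s - 1 : ℕ) : ℝ) / m) ^ (k - s) ≤ Real.exp 18 * pTwo ((s : ℝ) / m) ^ (k - s) := by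
  have hm' : (0:ℝ) < m := by exact_mod_cast hm
  have hs' : (1:ℝ) ≤ s := by exact_mod_cast hs
  have hsk' : (s:ℝ) ≤ k := by exact_mod_cast hsk
  rw [Nat.cast_sub hs, Nat.cast_one]
  set x := (s : ℝ) / m with hx
  have hx0 : 0 < x := by rw [hx]; positivity
  have hx1 : x < 41/50 := by rw [hx, div_lt_iff₀ hm']; linarith
  have e : ((s : ℝ) - 1) / m = x - 1 / m := by rw [hx]; ring
  rw [e]
  set h := 1 / (m : ℝ) with hh
  have hh0 : 0 < h := by positivity
  have hhx : h ≤ x := by rw [hh, hx]; gcongr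
  have hp : 0.085 ≤ pTwo x := by
    unfold pTwo
    nlinarith [mul_nonneg (sub_nonneg.2 hx1.le) hx0.le, mul_nonneg (mul_nonneg (sub_nonneg.2 hx1.le) hx0.le) (sub_nonneg.2 hx1.le), mul_nonneg (mul_nonneg (sub_nonneg.2 hx1.le) hx0.le) hx0.le]
  have hstep : pTwo (x - h) ≤ pTwo x + 1.5 * h := by
    unfold pTwo
    nlinarith [mul_nonneg hh0.le (sub_nonneg.2 hhx), mul_nonneg hh0.le (sq_nonneg (x - 1/2)), mul_nonneg hh0.le (sq_nonneg (x - h - 1/2)), mul_nonneg hh0.le (sq_nonneg (x - h/2 - 1/2)), mul_nonneg hh0.le (sq_nonneg h)]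
  have hfac : pTwo (x - h) ≤ Real.exp (18 * h) * pTwo x := by
    have : 18 * h + 1 ≤ Real.exp (18 * h) := Real.add_one_le_exp _
    nlinarith
  have hnn : 0 ≤ pTwo (x - h) := (pTwo_pos (by linarith) (by linarith)).le
  calc pTwo (x - h) ^ (k - s) ≤ (Real.exp (18 * h) * pTwo x) ^ (k - s) := by gcongr
    _ = Real.exp ((k - s : ℕ) * (18 * h)) * pTwo x ^ (k - s) := by
        rw [mul_pow, ← Real.exp_nat_mul]
    _ ≤ _ := by
        have : ((k - s : ℕ) : ℝ) ≤ m := by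
          have h1 : ((k - s : ℕ) : ℝ) ≤ k := by exact_mod_cast Nat.sub_le _ _
          linarith
        have h2 : ((k - s : ℕ) : ℝ) * (18 * h) ≤ 18 := by
          calc _ ≤ (m:ℝ) * (18 * h) := by gcongr
            _ = 18 := by rw [hh]; field_simp
        have h3 : 0 < pTwo x := by linarith
        gcongr

theorem choose_pred_le (m s : ℕ) (hs : 0 < s) (hm : 0 < m) (hsm : (s : ℝ) < 41/50 * m) :
    (m.choose (s - 1) : ℝ) ≤ 6 * s / m * m.choose s := by
  have hm' : (0:ℝ) < m := by exact_mod_cast hm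
  obtain ⟨r, rfl⟩ := Nat.exists_eq_succ_of_ne_zero hs.ne'
  simp only [Nat.succ_eq_add_one, Nat.add_sub_cancel] at *
  have h := Nat.choose_succ_right_eq m r
  have hrm : r ≤ m := by
    have : (r : ℝ) ≤ m := by push_cast at hsm; linarith
    exact_mod_cast this
  have h' : (m.choose (r + 1) : ℝ) * (r + 1) = m.choose r * (m - r) := by
    rw [← Nat.cast_sub hrm]; exact_mod_cast h
  push_cast at hsm ⊢
  rw [div_mul_eq_mul_div, le_div_iff₀ hm']
  have : (0:ℝ) ≤ m.choose r := by positivity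
  nlinarith

theorem unionTerm_le (m k s : ℕ) (hs : 2 ≤ s) (hsk : s ≤ k) (hm : 0 < m)
    (hk : (k : ℝ) < 41/50 * m) :
    unionTerm m k s ≤ 18 * Real.exp 18 * s ^ 2 / m * Real.exp (m * rate (s / m)) := by
  have hm' : (0:ℝ) < m := by exact_mod_cast hm
  have hsk' : (s:ℝ) ≤ k := by exact_mod_cast hsk
  have hx1 : (s : ℝ) / m < 41/50 := by rw [div_lt_iff₀ hm']; linarith
  have b1 := choose_mul_pTwo_le m k s (by omega) hsk hm hk _ rfl
  have b2 := choose_le_exp m s (by omega) hm _ rfl (by linarith)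
  have b3 := surj_factor_le m s (by omega) hm _ rfl
  have b4 := pTwo_shift m k s (by omega) hsk hm hk
  have b5 := choose_pred_le m s (by omega) hm (by linarith)
  have hx0 : 0 ≤ (s : ℝ) / m := by positivity
  have hp := pTwo_pos hx0 (by linarith)
  have he : 0 ≤ Real.exp 3 - 1 := by linarith [Real.add_one_le_exp (3:ℝ)]
  have hp' : 0 ≤ pTwo (((s - 1 : ℕ) : ℝ) / m) := by
    refine (pTwo_pos (by positivity) (lt_of_le_of_lt ?_ (hx1.trans (by norm_num)))).le
    gcongr; omega
  unfold unionTerm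
  calc _ ≤ (k.choose s : ℝ) * (6 * s / m * m.choose s) *
        ((3 * s).factorial * (Real.exp 3 - 1) ^ (s - 1) / 27 ^ s / (m : ℝ) ^ (3 * s)) *
        (Real.exp 18 * pTwo ((s : ℝ) / m) ^ (k - s)) := by
        gcongr
    _ = ((k.choose s : ℝ) * pTwo ((s : ℝ) / m) ^ (k - s)) * (m.choose s) *
        ((3 * s).factorial * (Real.exp 3 - 1) ^ (s - 1) / 27 ^ s / (m : ℝ) ^ (3 * s)) *
        (6 * s / m * Real.exp 18) := by ring
    _ ≤ _ := ?_
  refine (mul_le_mul_of_nonneg_right (mul_le_mul (mul_le_mul b1 b2 (by positivity)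
    (by positivity)) b3 (by positivity) (by positivity)) (by positivity)).trans (le_of_eq ?_)
  set x := (s : ℝ) / m with hx
  have hr : (m : ℝ) * rate x = m * (41/50 * Real.log (41/50) - (41/50 - x) * Real.log (41/50 - x)
        - x * Real.log x + (41/50 - x) * (2 * Real.log (1 - x) + Real.log (1 + 2 * x))) +
      m * (- (x * Real.log x) - (1 - x) * Real.log (1 - x)) +
      m * (3 * (x * Real.log x) + x * Real.log (1 - Real.exp (-3))) := by
    unfold rate; ring
  rw [hr, Real.exp_add, Real.exp_add]
  ring

/-! ### Summing the union bound -/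

/-- The union-bound exponent `rate` is negative with enough room to absorb the factor `s ^ 2`:
logarithmic decay for small `s / m`, a uniform negative bound otherwise. -/
theorem sq_mul_exp_rate_le (m s : ℕ) (hs : 2 ≤ s) (hm : 0 < m) (hsm : (s : ℝ) / m < 41/50) :
    (s : ℝ) ^ 2 * Real.exp (m * rate (s / m)) ≤
      (24 * Real.exp 6 + 24 / 0.0004 ^ 4) / (m : ℝ) ^ 2 := by
  have hm' : (0:ℝ) < m := by exact_mod_cast hm
  have hs' : (2:ℝ) ≤ s := by exact_mod_cast hs
  -- Polynomial factors are absorbed by the fourth-order term of the exponential series.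
  have hfour : ∀ t : ℝ, 0 ≤ t → t ^ 4 ≤ 24 * Real.exp t := by
    intro t ht
    have := Real.pow_div_factorial_le_exp t ht 4
    rw [div_le_iff₀ (by positivity)] at this
    norm_num [Nat.factorial] at this
    linarith
  have hx0 : 0 < (s : ℝ) / m := by positivity
  rw [le_div_iff₀ (by positivity)]
  rcases le_or_gt ((s : ℝ) / m) (1/20) with h | h
  · have hr := rate_le_small _ hx0 (by linarith)
    have hlog : Real.log ((s : ℝ) / m) + 1.82 ≤ -1 := by
      have h1 : Real.log ((s : ℝ) / m) ≤ Real.log (1/20) := Real.log_le_log hx0 h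
      have h2 : Real.log (1/20) = Real.log (1/10) - Real.log 2 := by
        rw [← Real.log_div (by norm_num) (by norm_num)]; norm_num
      linarith [log_01, log_two_ge]
    set y := Real.log ((s : ℝ) / m) + 1.82 with hy
    have hexp : (m : ℝ) * rate (s / m) ≤ 2 * Real.log ((s : ℝ) / m) + 6 - s := by
      have h1 : (m : ℝ) * rate (s / m) ≤ s * y := by
        calc (m : ℝ) * rate (s / m) ≤ m * ((s : ℝ) / m * y) := by gcongr
          _ = s * y := by field_simp
      nlinarith
    have h2 : Real.exp (m * rate (s / m)) ≤ ((s : ℝ) / m) ^ 2 * Real.exp 6 / Real.exp s := by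
      refine (Real.exp_le_exp.2 hexp).trans (le_of_eq ?_)
      rw [Real.exp_sub, Real.exp_add, pow_eq_exp_log hx0 2]; norm_num
    calc (s : ℝ) ^ 2 * Real.exp (m * rate (s / m)) * (m : ℝ) ^ 2
        ≤ (s : ℝ) ^ 2 * (((s : ℝ) / m) ^ 2 * Real.exp 6 / Real.exp s) * (m : ℝ) ^ 2 := by gcongr
      _ = (s : ℝ) ^ 4 * Real.exp 6 / Real.exp s := by field_simp
      _ ≤ 24 * Real.exp s * Real.exp 6 / Real.exp s := by gcongr; exact hfour _ (by linarith)
      _ = 24 * Real.exp 6 := by field_simp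
      _ ≤ _ := by norm_num
  · have hr := rate_le_mid _ h.le hsm
    have hsm' : (s : ℝ) ≤ m := by rw [div_lt_iff₀ hm'] at hsm; linarith
    have h1 := hfour (0.0004 * m) (by positivity)
    calc (s : ℝ) ^ 2 * Real.exp (m * rate (s / m)) * (m : ℝ) ^ 2
        ≤ (m : ℝ) ^ 2 * Real.exp (m * -0.0004) * (m : ℝ) ^ 2 := by gcongr
      _ = (0.0004 * m : ℝ) ^ 4 / Real.exp (0.0004 * m) / 0.0004 ^ 4 := by
          rw [show (m : ℝ) * -0.0004 = -(0.0004 * m) by ring, Real.exp_neg]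
          field_simp
      _ ≤ 24 * Real.exp (0.0004 * m) / Real.exp (0.0004 * m) / 0.0004 ^ 4 := by gcongr
      _ = 24 / 0.0004 ^ 4 := by field_simp
      _ ≤ _ := by linarith [Real.exp_pos 6]

/-- Fewer than `m` values of `s` and at most `2m` values of `k` contribute, each term being
`O(1/m ^ 3)`. -/
theorem bad_three_le (n m : ℕ) (hm : 0 < m) (hn : (n : ℝ) < 41/50 * m) :
    ((badConfigs n m 3).card : ℝ) / (m : ℝ) ^ (3 * n) ≤
      36 * Real.exp 18 * (24 * Real.exp 6 + 24 / 0.0004 ^ 4) / m := by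
  have hm' : (1:ℝ) ≤ m := by exact_mod_cast hm
  set C := 24 * Real.exp 6 + 24 / 0.0004 ^ 4 with hC
  have hC0 : 0 < C := by positivity
  set D := 18 * Real.exp 18 * C / (m : ℝ) ^ 3 with hD
  have hD0 : 0 ≤ D := by positivity
  refine (bad_le_sum n m hm).trans ?_
  have hterm : ∀ k ∈ Finset.range (n + 1), ∑ s ∈ Finset.Icc 2 k, unionTerm m k s ≤ m * D := by
    intro k hk
    have hkn : (k : ℝ) ≤ n := by
      exact_mod_cast Nat.lt_succ_iff.1 (Finset.mem_range.1 hk)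
    have h1 : ∀ s ∈ Finset.Icc 2 k, unionTerm m k s ≤ D := by
      intro s hs
      obtain ⟨hs2, hsk⟩ := Finset.mem_Icc.1 hs
      have hsk' : (s : ℝ) ≤ k := by exact_mod_cast hsk
      have h2 := unionTerm_le m k s hs2 hsk hm (by linarith)
      have h3 := sq_mul_exp_rate_le m s hs2 hm (by rw [div_lt_iff₀ (by linarith)]; linarith)
      calc _ ≤ _ := h2
        _ = 18 * Real.exp 18 / m * ((s : ℝ) ^ 2 * Real.exp (m * rate (s / m))) := by ring
        _ ≤ 18 * Real.exp 18 / m * (C / (m : ℝ) ^ 2) := by gcongr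
        _ = D := by rw [hD]; field_simp
    refine (Finset.sum_le_card_nsmul _ _ _ h1).trans ?_
    rw [nsmul_eq_mul]
    have : ((Finset.Icc 2 k).card : ℝ) ≤ m := by
      have h4 : (Finset.Icc 2 k).card ≤ k := by simp
      have h5 : ((Finset.Icc 2 k).card : ℝ) ≤ k := by exact_mod_cast h4
      linarith
    gcongr
  refine (Finset.sum_le_card_nsmul _ _ _ hterm).trans ?_
  rw [nsmul_eq_mul, Finset.card_range]
  have h6 : ((n + 1 : ℕ) : ℝ) ≤ 2 * m := by push_cast; linarith
  calc _ ≤ 2 * (m : ℝ) * (m * D) := by gcongr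
    _ = _ := by rw [hD]; field_simp; try ring

/-! ### The threshold is below `41/50` -/

/-- For `d = 3` the value is `z/3 + 1/3 + 1/(12z)`, and the equation for `z` confines it to
`(1, 1.26]`. -/
theorem alpha_three_lt (z : ℝ) (hz : 0 < z) (he : Real.exp z = 1 + 2 * z) :
    z / (3 * (1 - Real.exp (-z)) ^ 2) < 41/50 := by
  have h1 : 1 < z := by
    by_contra! h
    have hc := convexOn_exp.2 (Set.mem_univ (0:ℝ)) (Set.mem_univ (1:ℝ))
      (sub_nonneg.2 h) hz.le (by ring)
    simp only [smul_eq_mul, mul_zero, zero_add, mul_one, Real.exp_zero] at hc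
    have := Real.exp_one_lt_d9
    nlinarith
  have h2 : z ≤ 1.26 := by
    by_contra! h
    have hq := Real.quadratic_le_exp_of_nonneg (x := z - 1.26) (by linarith)
    have h3 : (3.52:ℝ) < Real.exp 1.26 := by
      have : Real.exp 1.26 = Real.exp 1 * Real.exp 0.26 := by rw [← Real.exp_add]; norm_num
      have h4 := Real.sum_le_exp_of_nonneg (x := 0.26) (by norm_num) 4
      norm_num [Finset.sum_range_succ, Nat.factorial] at h4
      rw [this]
      norm_num
      nlinarith [Real.exp_one_gt_d9]
    have h5 : Real.exp z = Real.exp 1.26 * Real.exp (z - 1.26) := by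
      rw [← Real.exp_add]; ring_nf
    nlinarith [Real.exp_pos (z - 1.26)]
  have h3 : 1 - Real.exp (-z) = 2 * z / (1 + 2 * z) := by
    rw [Real.exp_neg, he]; field_simp; ring
  rw [h3, div_lt_iff₀ (by positivity), div_pow, ← mul_div_assoc, ← mul_div_assoc,
    lt_div_iff₀ (by positivity)]
  nlinarith [mul_nonneg (sub_nonneg.2 h1.le) (sub_nonneg.2 h2)]

/-- For `d ≥ 4` the equation gives `1 - e ^ (-z) = (1 + 1/((d-1)z))⁻¹`, hence the value is at most
`z * e ^ (1/z) / d`, where `d * z = z + e ^ z - 1` and `z > 1.9`. -/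
theorem alpha_large_lt (d : ℕ) (hd : 4 ≤ d) (z : ℝ) (hz : 0 < z)
    (he : Real.exp z = 1 + ((d : ℝ) - 1) * z) :
    z / ((d : ℝ) * (1 - Real.exp (-z)) ^ (d - 1)) < 41/50 := by
  have hd' : (4:ℝ) ≤ d := by exact_mod_cast hd
  have hexp19 : (6.68:ℝ) < Real.exp 1.9 ∧ Real.exp 1.9 < 6.7 := by
    have h1 : Real.exp 1.9 * Real.exp 0.1 = Real.exp 1 ^ 2 := by
      rw [← Real.exp_add, ← Real.exp_nat_mul]; norm_num
    have h2 := Real.sum_le_exp_of_nonneg (x := 0.1) (by norm_num) 4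
    have h3 := Real.exp_bound' (x := 0.1) (by norm_num) (by norm_num) (n := 4) (by norm_num)
    norm_num [Finset.sum_range_succ, Nat.factorial] at h2 h3
    have h4 := Real.exp_one_gt_d9
    have h5 := Real.exp_one_lt_d9
    have h6 := Real.exp_pos 1.9
    have h7 : 7.389 < Real.exp 1 ^ 2 := by nlinarith
    have h8 : Real.exp 1 ^ 2 < 7.3891 := by nlinarith
    norm_num at h1 h7 h8 ⊢
    constructor <;> nlinarith
  have h1 : 1.9 < z := by
    by_contra! h
    have hc := convexOn_exp.2 (Set.mem_univ (0:ℝ)) (Set.mem_univ (1.9:ℝ))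
      (sub_nonneg.2 (by rw [div_le_one (by norm_num)]; exact h : z / 1.9 ≤ 1)) (by positivity : 0 ≤ z / 1.9) (by ring)
    simp only [smul_eq_mul, mul_zero, zero_add, mul_one, Real.exp_zero] at hc
    rw [div_mul_cancel₀ _ (by norm_num)] at hc
    have : z / 1.9 * Real.exp 1.9 < z / 1.9 * 6.7 := by
      apply mul_lt_mul_of_pos_left hexp19.2; positivity
    have hz' : z / 1.9 * 5.7 = 3 * z := by ring
    nlinarith
  have h2 : Real.exp (1 / z) ≤ 1.694 := by
    have h3 : (1:ℝ) / z ≤ 1 / 1.9 := by gcongr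
    have h4 := Real.exp_bound' (x := 1 / 1.9) (by norm_num) (by norm_num) (n := 5) (by norm_num)
    refine (Real.exp_le_exp.2 h3).trans (h4.trans ?_)
    norm_num [Finset.sum_range_succ, Nat.factorial]
  have hw : 0 < ((d : ℝ) - 1) * z := by nlinarith
  have h3 : 1 - Real.exp (-z) = (1 + 1 / (((d : ℝ) - 1) * z))⁻¹ := by
    have : (d : ℝ) - 1 ≠ 0 := by linarith
    rw [Real.exp_neg, he]; field_simp; ring
  have h4 : (1 + 1 / (((d : ℝ) - 1) * z)) ^ (d - 1) ≤ Real.exp (1 / z) := by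
    have h5 : 1 + 1 / (((d : ℝ) - 1) * z) ≤ Real.exp (1 / (((d : ℝ) - 1) * z)) := by
      linarith [Real.add_one_le_exp (1 / (((d : ℝ) - 1) * z))]
    calc _ ≤ Real.exp (1 / (((d : ℝ) - 1) * z)) ^ (d - 1) := by gcongr
      _ = Real.exp (1 / z) := by
        rw [← Real.exp_nat_mul, Nat.cast_sub (by omega), Nat.cast_one]
        have : (d : ℝ) - 1 ≠ 0 := by linarith
        congr 1; field_simp
  -- `2.066` exceeds `1.694 / 0.82`.
  have h6 : 2.066 * z ^ 2 < z + Real.exp z - 1 := by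
    have hq := Real.sum_le_exp_of_nonneg (x := z - 1.9) (by linarith) 4
    norm_num [Finset.sum_range_succ, Nat.factorial] at hq
    have h5 : Real.exp z = Real.exp 1.9 * Real.exp (z - 1.9) := by
      rw [← Real.exp_add]; ring_nf
    have h7 : 6.68 * Real.exp (z - 1.9) ≤ Real.exp z := by
      rw [h5]; gcongr; exact hexp19.1.le
    norm_num at *
    obtain ⟨x, rfl⟩ : ∃ x, z = x + 19/10 := ⟨z - 19/10, by ring⟩
    have hx : 0 < x := by linarith
    ring_nf at *
    nlinarith [pow_pos hx 2, pow_pos hx 3]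
  have h8 : (d : ℝ) * z = z + Real.exp z - 1 := by rw [he]; ring
  rw [h3, inv_pow, ← div_eq_mul_inv, div_div_eq_mul_div]
  calc _ ≤ z * 1.694 / d := by gcongr; exact h4.trans h2
    _ < 41/50 := by
      rw [div_lt_iff₀ (by positivity)]
      nlinarith

/-! ### Reduction to three choices -/

/-- If a configuration with `3 + e` choices is bad, so is its restriction to the first three. -/
theorem card_badConfigs_le (n m e : ℕ) :
    (badConfigs n m (3 + e)).card ≤ (badConfigs n m 3).card * (m ^ e) ^ n := by
  have h : (badConfigs n m (3 + e)).card ≤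
      (badConfigs n m 3 ×ˢ (Finset.univ : Finset (Fin n → Fin e → Fin m))).card := by
    refine Finset.card_le_card_of_injOn
      (fun c => (fun x j => c x (Fin.castAdd e j), fun x j => c x (Fin.natAdd 3 j))) ?_ ?_
    · intro c hc
      simp only [badConfigs, Finset.coe_filter, Set.mem_ofPred_eq, Finset.mem_univ, true_and,
        Finset.coe_product, Set.mem_prod, Finset.coe_univ, Set.mem_univ, and_true] at hc ⊢
      rintro ⟨φ, hφ, hm⟩
      exact hc ⟨φ, hφ, fun x => (hm x).imp' (Fin.castAdd e) fun _ h => h⟩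
    · intro c _ c' _ h
      rw [Prod.mk.injEq] at h
      funext x j
      induction j using Fin.addCases with
      | left j => exact congrFun (congrFun h.1 x) j
      | right j => exact congrFun (congrFun h.2 x) j
  rw [Finset.card_product] at h
  simpa using h

theorem bad_le_bad_three (n m d : ℕ) (hd : 3 ≤ d) (hm : 0 < m) :
    ((badConfigs n m d).card : ℝ) / ((m : ℝ) ^ d) ^ n ≤
      ((badConfigs n m 3).card : ℝ) / (m : ℝ) ^ (3 * n) := by
  obtain ⟨e, rfl⟩ := Nat.exists_eq_add_of_le hd
  have hm' : (0:ℝ) < m := by exact_mod_cast hm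
  have h : ((badConfigs n m (3 + e)).card : ℝ) ≤ (badConfigs n m 3).card * ((m : ℝ) ^ e) ^ n := by
    exact_mod_cast card_badConfigs_le n m e
  rw [pow_add, mul_pow, ← pow_mul, ← div_div, div_right_comm]
  gcongr
  rwa [div_le_iff₀ (by positivity)]

theorem threshold_lt (d : ℕ) (hd : 3 ≤ d) (z : ℝ) (hz : 0 < z)
    (he : z = (Real.exp z - 1) / ((d : ℝ) - 1)) :
    z / ((d : ℝ) * (1 - Real.exp (-z)) ^ (d - 1)) < 41/50 := by
  have hd' : (3:ℝ) ≤ d := by exact_mod_cast hd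
  have he' : Real.exp z = 1 + ((d : ℝ) - 1) * z := by
    rw [eq_div_iff (by linarith)] at he; linarith
  rcases hd.eq_or_lt with rfl | h
  · have h3 := alpha_three_lt z hz (by rw [he']; norm_num)
    norm_num at h3 ⊢
    exact h3
  · exact alpha_large_lt d h z hz he'

/-- Fix an integer `d ≥ 3`, let `z₁ > 0` solve `z₁ = (e^{z₁}-1)/(d-1)` and
`α₁ = z₁/(d(1-e^{-z₁})^{d-1})`. If `0 < α ≤ α₁`, `n = ⌊αm⌋`, and each of the `n` left
vertices independently picks `d` uniformly random right vertices among `m`, then whp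
(as `m → ∞`) the random bipartite graph has a matching of size `n`, i.e. saturating `L`. -/
theorem stmt_1 (d : ℕ) (hd : 3 ≤ d) (z₁ α : ℝ) (hz₁pos : 0 < z₁)
    (hz₁eq : z₁ = (Real.exp z₁ - 1) / ((d : ℝ) - 1))
    (hα0 : 0 < α)
    (hα1 : α ≤ z₁ / ((d : ℝ) * (1 - Real.exp (-z₁)) ^ (d - 1))) :
    Filter.Tendsto
      (fun m : ℕ =>
        (((Finset.univ : Finset (Fin ⌊α * (m : ℝ)⌋₊ → Fin d → Fin m)).filter
            (fun c => ∃ φ : Fin ⌊α * (m : ℝ)⌋₊ → Fin m,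
              Function.Injective φ ∧ ∀ x, ∃ j : Fin d, c x j = φ x)).card : ℝ) /
          (Fintype.card (Fin ⌊α * (m : ℝ)⌋₊ → Fin d → Fin m) : ℝ))
      Filter.atTop (nhds 1) := by
  have hα : α < 41/50 := hα1.trans_lt (threshold_lt d hd z₁ hz₁pos hz₁eq)
  set K := 36 * Real.exp 18 * (24 * Real.exp 6 + 24 / 0.0004 ^ 4) with hK
  have hlim : Filter.Tendsto (fun m : ℕ => 1 - K / (m : ℝ)) Filter.atTop (nhds 1) := by
    simpa using (tendsto_const_div_atTop_nhds_zero_nat K).const_sub 1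
  refine tendsto_of_tendsto_of_tendsto_of_le_of_le' hlim tendsto_const_nhds ?_
    (Filter.Eventually.of_forall fun m => ?_)
  · filter_upwards [Filter.eventually_gt_atTop 0] with m hm
    have hm' : (0:ℝ) < m := by exact_mod_cast hm
    have hn : ((⌊α * (m : ℝ)⌋₊ : ℕ) : ℝ) < 41/50 * m :=
      (Nat.floor_le (by positivity)).trans_lt (by gcongr)
    generalize ⌊α * (m : ℝ)⌋₊ = n at hn ⊢
    have hcard : Fintype.card (Fin n → Fin d → Fin m) = (m ^ d) ^ n := by simp
    have hbad := (bad_le_bad_three n m d hd hm).trans (bad_three_le n m hm hn)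
    have hsplit := Finset.card_filter_add_card_filter_not
      (s := (Finset.univ : Finset (Fin n → Fin d → Fin m)))
      (fun c => ∃ φ : Fin n → Fin m, Function.Injective φ ∧ ∀ x, ∃ j : Fin d, c x j = φ x)
    rw [Finset.card_univ, hcard] at hsplit
    rw [div_le_iff₀ (by positivity)] at hbad
    rw [hcard, le_div_iff₀ (by positivity)]
    have hs : (((Finset.univ : Finset (Fin n → Fin d → Fin m)).filter
        (fun c => ∃ φ : Fin n → Fin m,
          Function.Injective φ ∧ ∀ x, ∃ j : Fin d, c x j = φ x)).card : ℝ) +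
        (badConfigs n m d).card = ((m : ℝ) ^ d) ^ n := by
      have h := congrArg (Nat.cast : ℕ → ℝ) hsplit
      push_cast at h
      rw [← h]
      unfold badConfigs
      congr!
    push_cast
    refine le_trans (b := ((m : ℝ) ^ d) ^ n - (badConfigs n m d).card) ?_ ?_
    · rw [sub_mul, one_mul]; gcongr
    · rw [← hs]; ring_nf; apply le_of_eq; congr!
  · refine div_le_one_of_le₀ ?_ (by positivity)
    exact_mod_cast Finset.card_le_univ _
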